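/- Unconditional stability of the Douglas direction-splitting scheme for the heat equation in spherical coordinates: Let τ > 0, N ≥ 2, and let T^0, T^1, ..., T^N be smooth functions on the closed box B, each vanishing on the boundary ∂B, which satisfy for every n = 1, ..., N−1 the factorized scheme (I − (τ/2) D_rr)(I − (τ/2) D̂_θθ)(I − (τ/2) D̂_φφ)((T^{n+1} − T^n)/τ) = Δ((3/2)T^n − (1/2)T^{n−1}) − (1/2) Δ̂ (T^n − T^{n−1}) on B. Then τ Σ_{n=1}^{N−1} ‖T^{n+1} − T^n‖²_ω / τ² + (1/2) ‖∇T^N‖²_ω + (1/4) ( ‖∂_θ(T^N − T^{N−1})‖²_{ω1} + ‖∂_φ(T^N − T^{N−1})‖²_{ω2} ) ≤ (1/2) ‖∇T^1‖²_ω + (1/4) ( ‖∂_θ(T^1 − T^0)‖²_{ω1} + ‖∂_φ(T^1 − T^0)‖²_{ω2} ). -/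

import Mathlib

open MeasureTheory Real Set

noncomputable section

/-- Partial derivative in the radial direction. -/
def pr (u : ℝ → ℝ → ℝ → ℝ) (r θ φ : ℝ) : ℝ := deriv (fun s => u s θ φ) r

/-- Partial derivative in the θ direction. -/
def pt (u : ℝ → ℝ → ℝ → ℝ) (r θ φ : ℝ) : ℝ := deriv (fun s => u r s φ) θ

/-- Partial derivative in the φ direction. -/
def pp (u : ℝ → ℝ → ℝ → ℝ) (r θ φ : ℝ) : ℝ := deriv (fun s => u r θ s) φ

/-- `D_rr u = r⁻² ∂_r (r² ∂_r u)`. -/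
def Drr (u : ℝ → ℝ → ℝ → ℝ) : ℝ → ℝ → ℝ → ℝ := fun r θ φ =>
  (1 / r ^ 2) * pr (fun r' θ' φ' => r' ^ 2 * pr u r' θ' φ') r θ φ

/-- `D_θθ u = (r² sin θ)⁻¹ ∂_θ (sin θ ∂_θ u)`. -/
def Dtt (u : ℝ → ℝ → ℝ → ℝ) : ℝ → ℝ → ℝ → ℝ := fun r θ φ =>
  (1 / (r ^ 2 * Real.sin θ)) * pt (fun r' θ' φ' => Real.sin θ' * pt u r' θ' φ') r θ φ

/-- Modified operator `D̂_θθ u = (R1² sin θ)⁻¹ ∂_θ (sin θ ∂_θ u)`. -/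
def Dhtt (R1 : ℝ) (u : ℝ → ℝ → ℝ → ℝ) : ℝ → ℝ → ℝ → ℝ := fun r θ φ =>
  (1 / (R1 ^ 2 * Real.sin θ)) * pt (fun r' θ' φ' => Real.sin θ' * pt u r' θ' φ') r θ φ

/-- `D_φφ u = (r² sin² θ)⁻¹ ∂²_φ u`. -/
def Dpp (u : ℝ → ℝ → ℝ → ℝ) : ℝ → ℝ → ℝ → ℝ := fun r θ φ =>
  (1 / (r ^ 2 * Real.sin θ ^ 2)) * pp (pp u) r θ φ

/-- Modified operator `D̂_φφ u = (R1² sin² θ1)⁻¹ ∂²_φ u`. -/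
def Dhpp (R1 θone : ℝ) (u : ℝ → ℝ → ℝ → ℝ) : ℝ → ℝ → ℝ → ℝ := fun r θ φ =>
  (1 / (R1 ^ 2 * Real.sin θone ^ 2)) * pp (pp u) r θ φ

/-- Spherical Laplacian `Δ = D_rr + D_θθ + D_φφ`. -/
def lap (u : ℝ → ℝ → ℝ → ℝ) : ℝ → ℝ → ℝ → ℝ := fun r θ φ =>
  Drr u r θ φ + Dtt u r θ φ + Dpp u r θ φ

/-- Modified Laplacian `Δ̂ = D_rr + D̂_θθ + D̂_φφ`. -/
def laph (R1 θone : ℝ) (u : ℝ → ℝ → ℝ → ℝ) : ℝ → ℝ → ℝ → ℝ := fun r θ φ =>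
  Drr u r θ φ + Dhtt R1 u r θ φ + Dhpp R1 θone u r θ φ

/-- Weighted inner product `(u, v)_ω = ∫_B u v r² sin θ dr dθ dφ`. -/
def ipw (R1 R2 θ1 θ2 φ1 φ2 : ℝ) (u v : ℝ → ℝ → ℝ → ℝ) : ℝ :=
  ∫ r in Icc R1 R2, ∫ θ in Icc θ1 θ2, ∫ φ in Icc φ1 φ2,
    u r θ φ * v r θ φ * (r ^ 2 * Real.sin θ)

/-- Squared norm with a general nonnegative weight `w(r, θ)`:
`‖v‖²_w = ∫_B w v² dr dθ dφ`. -/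
def wnorm (R1 R2 θ1 θ2 φ1 φ2 : ℝ) (w : ℝ → ℝ → ℝ) (v : ℝ → ℝ → ℝ → ℝ) : ℝ :=
  ∫ r in Icc R1 R2, ∫ θ in Icc θ1 θ2, ∫ φ in Icc φ1 φ2,
    w r θ * (v r θ φ) ^ 2

/-- Spherical gradient energy `‖∇u‖²_ω`. -/
def gradE (R1 R2 θ1 θ2 φ1 φ2 : ℝ) (u : ℝ → ℝ → ℝ → ℝ) : ℝ :=
  ∫ r in Icc R1 R2, ∫ θ in Icc θ1 θ2, ∫ φ in Icc φ1 φ2,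
    ((pr u r θ φ) ^ 2 + (1 / r ^ 2) * (pt u r θ φ) ^ 2
      + (1 / (r * Real.sin θ) ^ 2) * (pp u r θ φ) ^ 2) * (r ^ 2 * Real.sin θ)

/-- The closed coordinate box `B = [R1,R2] × [θ1,θ2] × [φ1,φ2]`. -/
def SBox (R1 R2 θ1 θ2 φ1 φ2 : ℝ) : Set (ℝ × ℝ × ℝ) :=
  Icc R1 R2 ×ˢ Icc θ1 θ2 ×ˢ Icc φ1 φ2

/-- `u` is smooth (C^∞) up to the boundary of the closed box. -/
def SmoothOnBox (R1 R2 θ1 θ2 φ1 φ2 : ℝ) (u : ℝ → ℝ → ℝ → ℝ) : Prop :=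
  ContDiffOn ℝ (⊤ : ℕ∞) (fun p : ℝ × ℝ × ℝ => u p.1 p.2.1 p.2.2) (SBox R1 R2 θ1 θ2 φ1 φ2)

/-- `u` vanishes on the boundary `∂B` of the closed box. -/
def VanishOnBdry (R1 R2 θ1 θ2 φ1 φ2 : ℝ) (u : ℝ → ℝ → ℝ → ℝ) : Prop :=
  ∀ p ∈ frontier (SBox R1 R2 θ1 θ2 φ1 φ2), u p.1 p.2.1 p.2.2 = 0

/-!
Pair the scheme with the difference quotient `(Tⁿ⁺¹ - Tⁿ) / τ` in the weighted inner product. On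
functions vanishing on the boundary the one-directional operators are self-adjoint and nonpositive,
and the modified ones, having constant coefficients in front, commute with the partial derivatives
in the other directions. Hence all higher terms of the factorized operator contribute weighted
squares of mixed derivatives, and dropping them leaves `‖v‖² + τ/2 K(v, v)`, with `K` the Dirichlet
form of `-Δ̂`. Let `G` be that of `-Δ`. By polarization, the explicit right-hand side turns this
bound into the decrease of `½ G(Tⁿ, Tⁿ) + ¼ (K - G)(Tⁿ - Tⁿ⁻¹, Tⁿ - Tⁿ⁻¹)`, up to a quarter of
`K - G` at the second difference; this is nonnegative since `r ≥ R1` and `sin θ ≥ sin θ1` give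
`K ≥ G`. Summation over `n` telescopes.
-/

open scoped ContDiff

/-! ### The energy argument in a real vector space -/

section DouglasEnergy

variable {V : Type*} [AddCommGroup V] [Module ℝ V] {G K : LinearMap.BilinForm ℝ V}

/-- The energy decreased by the Douglas scheme: `x` and `y` are consecutive time levels, `G` is the
Dirichlet form of the operator being approximated and `K` that of the operator being factorized. -/
def douglasEnergy (G K : LinearMap.BilinForm ℝ V) (x y : V) : ℝ :=
  1 / 2 * G x x + 1 / 4 * (K - G) (x - y) (x - y)

-- The defect in the inequality is a quarter of `K - G` at the second difference `x - 2y + z`.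
theorem douglasEnergy_le_add (hG : G.IsSymm) (hK : K.IsSymm) (hGK : (K - G).IsNonneg)
    (x y z : V) :
    douglasEnergy G K x y ≤ douglasEnergy G K y z + (1 / 2 * K (x - y) (x - y)
      + G ((3 / 2 : ℝ) • y - (1 / 2 : ℝ) • z) (x - y) - 1 / 2 * K (y - z) (x - y)) := by
  have hdefect := hGK.nonneg (x - y - (y - z))
  simp only [douglasEnergy, map_sub, map_smul, LinearMap.sub_apply, LinearMap.smul_apply,
    smul_eq_mul, hG.eq x y, hG.eq x z, hG.eq y z, hK.eq x y, hK.eq x z, hK.eq y z] at hdefect ⊢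
  linarith

theorem douglasEnergy_step {M : LinearMap.BilinForm ℝ V} (hG : G.IsSymm) (hK : K.IsSymm)
    (hGK : (K - G).IsNonneg) {τ : ℝ} (hτ : 0 < τ) {x y z v : V} (hv : τ • v = x - y)
    (h : M v v + τ / 2 * K v v ≤
      -G ((3 / 2 : ℝ) • y - (1 / 2 : ℝ) • z) v + 1 / 2 * K (y - z) v) :
    τ * (M (x - y) (x - y) / τ ^ 2) + douglasEnergy G K x y ≤ douglasEnergy G K y z := by
  have hdefect := douglasEnergy_le_add hG hK hGK x y z
  have hMτ : τ * (M (x - y) (x - y) / τ ^ 2) = τ * M v v := by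
    rw [← hv]
    simp only [map_smul, LinearMap.smul_apply, smul_eq_mul]
    field_simp
  rw [hMτ]
  simp only [← hv, map_smul, LinearMap.smul_apply, smul_eq_mul] at hdefect
  linarith [mul_le_mul_of_nonneg_left h hτ.le]

end DouglasEnergy

theorem sum_Icc_add_le_of_forall_add_le {d E : ℕ → ℝ} {m : ℕ}
    (h : ∀ n ∈ Finset.Icc 1 m, d n + E (n + 1) ≤ E n) :
    ∑ n ∈ Finset.Icc 1 m, d n + E (m + 1) ≤ E 1 := by
  induction m with
  | zero => simp
  | succ m ih =>
    rw [Finset.sum_Icc_succ_top (by omega)]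
    have hlast := h (m + 1) (by simp)
    have hinit := ih fun n hn => h n (Finset.Icc_subset_Icc_right m.le_succ hn)
    linarith

/-! ### Smooth functions on a box -/

/-- A nondegenerate box in `ℝⁿ⁺¹` with a separable weight: `density i` is the positive smooth factor
of the weight depending on the `i`-th coordinate. -/
structure WeightedBox (n : ℕ) where
  lower : Fin (n + 1) → ℝ
  upper : Fin (n + 1) → ℝ
  density : Fin (n + 1) → ℝ → ℝ
  lower_lt_upper : ∀ i, lower i < upper i
  contDiffOn_density : ∀ i, ContDiffOn ℝ ∞ (density i) (Icc (lower i) (upper i))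
  density_pos : ∀ i, ∀ t ∈ Icc (lower i) (upper i), 0 < density i t

namespace WeightedBox

variable {n : ℕ} (B : WeightedBox n) {i j : Fin (n + 1)} {x : Fin (n + 1) → ℝ}

/-- The closed box on which the functions live. -/
def box : Set (Fin (n + 1) → ℝ) := Icc B.lower B.upper

theorem isCompact_box : IsCompact B.box := isCompact_Icc

theorem isClosed_box : IsClosed B.box := isClosed_Icc

theorem interior_box : interior B.box = Set.univ.pi fun i => Ioo (B.lower i) (B.upper i) := by
  simp only [box, ← pi_univ_Icc, interior_pi_set finite_univ, interior_Icc]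

theorem closure_interior_box : closure (interior B.box) = B.box := by
  rw [interior_box, closure_pi_set, box, ← pi_univ_Icc]
  exact congrArg _ (funext fun i => closure_Ioo (B.lower_lt_upper i).ne)

theorem uniqueDiffOn_box : UniqueDiffOn ℝ B.box := by
  rw [box, ← pi_univ_Icc]
  exact UniqueDiffOn.univ_pi fun i => uniqueDiffOn_Icc (B.lower_lt_upper i)

theorem apply_mem_Icc_of_mem_box (hx : x ∈ B.box) (i : Fin (n + 1)) :
    x i ∈ Icc (B.lower i) (B.upper i) :=
  ⟨hx.1 i, hx.2 i⟩

theorem update_mem_box (hx : x ∈ B.box) {t : ℝ} (ht : t ∈ Icc (B.lower i) (B.upper i)) :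
    Function.update x i t ∈ B.box := by
  rw [box, ← pi_univ_Icc] at hx ⊢
  exact (update_mem_pi_iff_of_mem hx).2 fun _ => ht

/-- The algebra of functions that are smooth up to the boundary of the box. Their values outside
the box are unconstrained. -/
def smoothFunctions : Subalgebra ℝ ((Fin (n + 1) → ℝ) → ℝ) where
  carrier := {F | ContDiffOn ℝ ∞ F B.box}
  mul_mem' := ContDiffOn.mul
  add_mem' := ContDiffOn.add
  algebraMap_mem' _ := contDiffOn_const

variable {B} {F G : B.smoothFunctions}

theorem contDiffOn (F : B.smoothFunctions) : ContDiffOn ℝ ∞ F.1 B.box := F.2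

theorem continuousOn (F : B.smoothFunctions) : ContinuousOn F.1 B.box :=
  (contDiffOn F).continuousOn

theorem differentiableWithinAt (F : B.smoothFunctions) (hx : x ∈ B.box) :
    DifferentiableWithinAt ℝ F.1 B.box x :=
  (contDiffOn F).differentiableOn (by simp) x hx

theorem eqOn_box_of_eqOn_interior (h : EqOn F.1 G.1 (interior B.box)) : EqOn F.1 G.1 B.box :=
  h.of_subset_closure (continuousOn F) (continuousOn G) interior_subset
    B.closure_interior_box.ge

variable (B)

theorem fderivWithin_box_eq_zero (F : (Fin (n + 1) → ℝ) → ℝ) (hx : x ∉ B.box) :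
    fderivWithin ℝ F B.box x = 0 :=
  fderivWithin_zero_of_notMem_closure (by rwa [B.isClosed_box.closure_eq])

/-- The partial derivative `∂ᵢ` relative to the box. It vanishes outside the box, so that the
algebraic laws of differentiation are identities of functions and not just identities on the box. -/
def partialDeriv (i : Fin (n + 1)) : Derivation ℝ B.smoothFunctions B.smoothFunctions :=
  Derivation.mk'
    { toFun := fun F => ⟨fun x => fderivWithin ℝ F.1 B.box x (Pi.single i 1),
        (F.2.fderivWithin (m := ∞) B.uniqueDiffOn_box (by simp)).clm_apply contDiffOn_const⟩
      map_add' := fun F G => by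
        ext x
        by_cases hx : x ∈ B.box
        · simp [fderivWithin_add (B.uniqueDiffOn_box x hx) (differentiableWithinAt F hx)
            (differentiableWithinAt G hx)]
        · simp [B.fderivWithin_box_eq_zero _ hx]
      map_smul' := fun c F => by
        ext x
        by_cases hx : x ∈ B.box
        · simp [fderivWithin_const_smul (B.uniqueDiffOn_box x hx) (differentiableWithinAt F hx) c]
        · simp [B.fderivWithin_box_eq_zero _ hx] }
    fun F G => by
      ext x
      by_cases hx : x ∈ B.box
      · simp [fderivWithin_mul (B.uniqueDiffOn_box x hx) (differentiableWithinAt F hx)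
          (differentiableWithinAt G hx)]
      · simp [B.fderivWithin_box_eq_zero _ hx]

variable {B}

theorem partialDeriv_apply (F : B.smoothFunctions) :
    (B.partialDeriv i F).1 x = fderivWithin ℝ F.1 B.box x (Pi.single i 1) := rfl

theorem partialDeriv_apply_eq_zero (F : B.smoothFunctions) (hx : x ∉ B.box) :
    (B.partialDeriv i F).1 x = 0 := by
  rw [partialDeriv_apply, B.fderivWithin_box_eq_zero _ hx, zero_apply]

theorem partialDeriv_partialDeriv_apply (F : B.smoothFunctions) (hx : x ∈ B.box) :
    (B.partialDeriv i (B.partialDeriv j F)).1 x =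
      fderivWithin ℝ (fderivWithin ℝ F.1 B.box) B.box x (Pi.single i 1) (Pi.single j 1) := by
  have hdiff : DifferentiableWithinAt ℝ (fderivWithin ℝ F.1 B.box) B.box x :=
    ((contDiffOn F).fderivWithin (m := ∞) B.uniqueDiffOn_box (by simp)).differentiableOn
      (by simp) x hx
  change fderivWithin ℝ (fun y => fderivWithin ℝ F.1 B.box y (Pi.single j 1)) B.box x _ = _
  simp [fderivWithin_clm_apply (B.uniqueDiffOn_box x hx) hdiff (differentiableWithinAt_const _)]

theorem partialDeriv_comm (i j : Fin (n + 1)) (F : B.smoothFunctions) :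
    B.partialDeriv i (B.partialDeriv j F) = B.partialDeriv j (B.partialDeriv i F) := by
  ext x
  by_cases hx : x ∈ B.box
  · have hsmooth : minSmoothness ℝ 2 ≤ ∞ := by
      rw [minSmoothness_of_isRCLikeNormedField]
      exact WithTop.coe_le_coe.2 le_top
    have hsymm : IsSymmSndFDerivWithinAt ℝ F.1 B.box x :=
      (contDiffOn F x hx).isSymmSndFDerivWithinAt hsmooth B.uniqueDiffOn_box
        (B.closure_interior_box.symm ▸ hx) hx
    rw [partialDeriv_partialDeriv_apply F hx, partialDeriv_partialDeriv_apply F hx, hsymm]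
  · rw [partialDeriv_apply_eq_zero _ hx, partialDeriv_apply_eq_zero _ hx]

theorem hasDerivWithinAt_update (F : B.smoothFunctions) (hx : x ∈ B.box) (i : Fin (n + 1)) :
    HasDerivWithinAt (fun t => F.1 (Function.update x i t)) ((B.partialDeriv i F).1 x)
      (Icc (B.lower i) (B.upper i)) (x i) := by
  have hF : HasFDerivWithinAt F.1 (fderivWithin ℝ F.1 B.box x) B.box
      (Function.update x i (x i)) := by
    rw [Function.update_eq_self]
    exact (differentiableWithinAt F hx).hasFDerivWithinAt
  exact hF.comp_hasDerivWithinAt (x i) (hasDerivAt_update x i (x i)).hasDerivWithinAt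
    fun t ht => B.update_mem_box hx ht

theorem partialDeriv_apply_eq_zero_of_forall_update (hx : x ∈ B.box) {c : ℝ}
    (h : ∀ t ∈ Icc (B.lower i) (B.upper i), F.1 (Function.update x i t) = c) :
    (B.partialDeriv i F).1 x = 0 := by
  have hxi := B.apply_mem_Icc_of_mem_box hx i
  exact (uniqueDiffOn_Icc (B.lower_lt_upper i) _ hxi).eq_deriv _ (hasDerivWithinAt_update F hx i)
    ((hasDerivWithinAt_const _ _ c).congr h (h _ hxi))

theorem partialDeriv_eq_zero_of_update_eq (h : ∀ x t, F.1 (Function.update x i t) = F.1 x) :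
    B.partialDeriv i F = 0 := by
  ext x
  by_cases hx : x ∈ B.box
  · exact partialDeriv_apply_eq_zero_of_forall_update hx fun t _ => h x t
  · exact partialDeriv_apply_eq_zero F hx

theorem deriv_eq_partialDeriv (F : B.smoothFunctions) (hx : x ∈ interior B.box) {g : ℝ → ℝ}
    (h : ∀ t, Function.update x i t ∈ interior B.box → g t = F.1 (Function.update x i t)) :
    deriv g (x i) = (B.partialDeriv i F).1 x := by
  have hxi : x i ∈ Ioo (B.lower i) (B.upper i) := by
    rw [interior_box] at hx
    exact hx i trivial
  have hderiv := (hasDerivWithinAt_update F (interior_subset hx) i).hasDerivAt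
    (Icc_mem_nhds hxi.1 hxi.2)
  refine (hderiv.congr_of_eventuallyEq ?_).deriv
  filter_upwards [isOpen_Ioo.mem_nhds hxi] with t ht
  refine h t ?_
  rw [interior_box] at hx ⊢
  exact (update_mem_pi_iff_of_mem hx).2 fun _ => ht

variable (B)

/-- The ideal of smooth functions that vanish on the two faces `xᵢ = lowerᵢ` and `xᵢ = upperᵢ`. -/
def faceIdeal (i : Fin (n + 1)) : Ideal B.smoothFunctions where
  carrier := {F | ∀ x ∈ B.box, x i = B.lower i ∨ x i = B.upper i → F.1 x = 0}
  add_mem' hF hG x hx hi := by simp [hF x hx hi, hG x hx hi]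
  zero_mem' _ _ _ := rfl
  smul_mem' c F hF x hx hi := by simp [hF x hx hi]

variable {B}

theorem partialDeriv_mem_faceIdeal (hij : i ≠ j) (hF : F ∈ B.faceIdeal j) :
    B.partialDeriv i F ∈ B.faceIdeal j := fun x hx hj =>
  partialDeriv_apply_eq_zero_of_forall_update hx fun t ht =>
    hF _ (B.update_mem_box hx ht) (by rwa [Function.update_of_ne hij.symm])

/-! ### Integration over the box -/

variable (B)

/-- Integration over the box, as a linear functional. -/
def integral : B.smoothFunctions →ₗ[ℝ] ℝ where
  toFun F := ∫ x in B.box, F.1 x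
  map_add' F G := integral_add ((continuousOn F).integrableOn_compact B.isCompact_box)
    ((continuousOn G).integrableOn_compact B.isCompact_box)
  map_smul' c F := integral_const_mul c F.1

variable {B}

theorem integral_congr (h : EqOn F.1 G.1 B.box) : B.integral F = B.integral G :=
  setIntegral_congr_fun B.isClosed_box.measurableSet h

theorem integral_nonneg (h : ∀ x ∈ B.box, 0 ≤ F.1 x) : 0 ≤ B.integral F :=
  setIntegral_nonneg B.isClosed_box.measurableSet h

theorem integral_sum_partialDeriv_eq_zero {V : Fin (n + 1) → B.smoothFunctions}
    (hV : ∀ i, V i ∈ B.faceIdeal i) : B.integral (∑ i, B.partialDeriv i (V i)) = 0 := by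
  have hle : B.lower ≤ B.upper := fun i => (B.lower_lt_upper i).le
  have hsum (x : Fin (n + 1) → ℝ) : (∑ i, B.partialDeriv i (V i)).1 x =
      ∑ i, fderivWithin ℝ (V i).1 B.box x (Pi.single i 1) := by
    simp [partialDeriv_apply]
  have hdiff : ∀ x ∈ (Set.univ.pi fun i => Ioo (B.lower i) (B.upper i)) \ ∅, ∀ i,
      HasFDerivAt (V i).1 (fderivWithin ℝ (V i).1 B.box x) x := fun x hx i => by
    rw [sdiff_empty, ← interior_box] at hx
    exact (differentiableWithinAt (V i) (interior_subset hx)).hasFDerivWithinAt.hasFDerivAt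
      (mem_interior_iff_mem_nhds.1 hx)
  have hint : IntegrableOn (fun x => ∑ i, fderivWithin ℝ (V i).1 B.box x (Pi.single i 1))
      (Icc B.lower B.upper) := by
    simp only [← hsum]
    exact (continuousOn _).integrableOn_compact B.isCompact_box
  have hface (i : Fin (n + 1)) {t : ℝ} (ht : t = B.lower i ∨ t = B.upper i) :
      ∫ y in Icc (B.lower ∘ i.succAbove) (B.upper ∘ i.succAbove), (V i).1 (i.insertNth t y) =
        0 := by
    have htmem : t ∈ Icc (B.lower i) (B.upper i) := by
      rcases ht with rfl | rfl
      exacts [left_mem_Icc.2 (hle i), right_mem_Icc.2 (hle i)]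
    refine setIntegral_eq_zero_of_forall_eq_zero fun y hy => hV i _ ?_ (by simpa using ht)
    exact Fin.insertNth_mem_Icc.2 ⟨htmem, hy⟩
  calc B.integral (∑ i, B.partialDeriv i (V i))
      = ∫ x in Icc B.lower B.upper, ∑ i, fderivWithin ℝ (V i).1 B.box x (Pi.single i 1) :=
        setIntegral_congr_fun B.isClosed_box.measurableSet fun x _ => hsum x
    _ = 0 := by
        rw [integral_divergence_of_hasFDerivAt_off_countable' _ _ hle (fun i => (V i).1)
          (fun i => fderivWithin ℝ (V i).1 B.box) ∅ countable_empty (fun i => continuousOn (V i))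
          hdiff hint]
        simp only [hface _ (.inl rfl), hface _ (.inr rfl), sub_zero, Finset.sum_const_zero]

theorem integral_partialDeriv_eq_zero (hF : F ∈ B.faceIdeal i) :
    B.integral (B.partialDeriv i F) = 0 := by
  have hV (j : Fin (n + 1)) :
      Pi.single (M := fun _ => B.smoothFunctions) i F j ∈ B.faceIdeal j := by
    by_cases hij : j = i
    · subst hij
      simpa
    · simp [hij]
  have hsum := integral_sum_partialDeriv_eq_zero hV
  rwa [Finset.sum_eq_single i (fun j _ hij => by rw [Pi.single_eq_of_ne hij, map_zero]) (by simp),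
    Pi.single_eq_same] at hsum

/-! ### Separable weights -/

variable (B)

/-- A function of the `i`-th coordinate alone. -/
def coordFun (i : Fin (n + 1)) (f : ℝ → ℝ)
    (hf : ContDiffOn ℝ ∞ f (Icc (B.lower i) (B.upper i))) : B.smoothFunctions :=
  ⟨fun x => f (x i), hf.comp (contDiff_apply ℝ ℝ i).contDiffOn fun _ hx =>
    B.apply_mem_Icc_of_mem_box hx i⟩

variable {B}

theorem partialDeriv_coordFun (hij : i ≠ j) {f : ℝ → ℝ}
    (hf : ContDiffOn ℝ ∞ f (Icc (B.lower j) (B.upper j))) :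
    B.partialDeriv i (B.coordFun j f hf) = 0 :=
  partialDeriv_eq_zero_of_update_eq fun x t => by
    simp only [coordFun, Function.update_of_ne hij.symm]

variable (B)

/-- The `i`-th factor of the weight, as a function on the box. -/
def factor (i : Fin (n + 1)) : B.smoothFunctions :=
  B.coordFun i (B.density i) (B.contDiffOn_density i)

/-- The reciprocal of `B.factor i`; this is a multiplicative inverse only on the box. -/
def factorInv (i : Fin (n + 1)) : B.smoothFunctions :=
  B.coordFun i (fun t => (B.density i t)⁻¹)
    ((B.contDiffOn_density i).inv fun t ht => (B.density_pos i t ht).ne')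

/-- The weight, i.e. the product of the one-dimensional densities. -/
def weight : B.smoothFunctions := ∏ i, B.factor i

theorem weight_apply (x : Fin (n + 1) → ℝ) : B.weight.1 x = ∏ i, B.density i (x i) := by
  simp [weight, factor, coordFun]

theorem weight_nonneg (hx : x ∈ B.box) : 0 ≤ B.weight.1 x := by
  rw [weight_apply]
  exact Finset.prod_nonneg fun i _ => (B.density_pos i _ (B.apply_mem_Icc_of_mem_box hx i)).le

theorem factor_mul_factorInv_apply (i : Fin (n + 1)) (hx : x ∈ B.box) :
    (B.factor i).1 x * (B.factorInv i).1 x = 1 :=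
  mul_inv_cancel₀ (B.density_pos i _ (B.apply_mem_Icc_of_mem_box hx i)).ne'

variable {B}

theorem exists_weight_eq_factor_mul (i : Fin (n + 1)) :
    ∃ ν : B.smoothFunctions, B.weight = B.factor i * ν ∧ B.partialDeriv i ν = 0 := by
  refine ⟨∏ j ∈ Finset.univ.erase i, B.factor j,
    (Finset.mul_prod_erase _ _ (Finset.mem_univ i)).symm, ?_⟩
  refine partialDeriv_eq_zero_of_update_eq fun x t => ?_
  simp only [factor, coordFun, SubmonoidClass.coe_finsetProd, Finset.prod_apply]
  exact Finset.prod_congr rfl fun j hj => by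
    rw [Function.update_of_ne (Finset.ne_of_mem_erase hj)]

variable (B)

/-- The inner product of `L²` with respect to the weight. -/
def weightedInner : LinearMap.BilinForm ℝ B.smoothFunctions :=
  (LinearMap.mul ℝ B.smoothFunctions).compr₂ (B.integral ∘ₗ LinearMap.mulLeft ℝ B.weight)

/-- The one-directional operator `F ↦ ρᵢ⁻¹ ∂ᵢ(ρᵢ ∂ᵢ F)`, where `ρᵢ` is the `i`-th factor of the
weight. -/
def sturmLiouville (i : Fin (n + 1)) : Module.End ℝ B.smoothFunctions :=
  LinearMap.mulLeft ℝ (B.factorInv i) ∘ₗ B.partialDeriv i ∘ₗ LinearMap.mulLeft ℝ (B.factor i) ∘ₗ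
    B.partialDeriv i

variable {B}

theorem weightedInner_apply (F G : B.smoothFunctions) :
    B.weightedInner F G = B.integral (B.weight * (F * G)) := rfl

theorem sturmLiouville_apply (F : B.smoothFunctions) :
    B.sturmLiouville i F = B.factorInv i * B.partialDeriv i (B.factor i * B.partialDeriv i F) := rfl

theorem weightedInner_nonneg (h : ∀ x ∈ B.box, 0 ≤ F.1 x * G.1 x) : 0 ≤ B.weightedInner F G :=
  integral_nonneg fun x hx => mul_nonneg (B.weight_nonneg hx) (h x hx)

theorem weightedInner_self_nonneg (F : B.smoothFunctions) : 0 ≤ B.weightedInner F F :=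
  weightedInner_nonneg fun x _ => mul_self_nonneg (F.1 x)

theorem weightedInner_congr_left {F' : B.smoothFunctions} (h : EqOn F.1 F'.1 B.box) :
    B.weightedInner F G = B.weightedInner F' G :=
  integral_congr fun x hx => congrArg (fun t => B.weight.1 x * (t * G.1 x)) (h hx)

theorem weightedInner_mul_sturmLiouville {c : B.smoothFunctions} (hc : B.partialDeriv i c = 0)
    (F : B.smoothFunctions) (hG : G ∈ B.faceIdeal i) :
    B.weightedInner (c * B.sturmLiouville i F) G =
      -B.weightedInner (c * B.partialDeriv i F) (B.partialDeriv i G) := by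
  obtain ⟨ν, hν, hDν⟩ := exists_weight_eq_factor_mul (B := B) i
  have hflux : ν * c * (B.factor i * B.partialDeriv i F) * G ∈ B.faceIdeal i :=
    Ideal.mul_mem_left _ _ hG
  have hleibniz : B.partialDeriv i (ν * c * (B.factor i * B.partialDeriv i F) * G) =
      ν * c * B.partialDeriv i (B.factor i * B.partialDeriv i F) * G +
        B.weight * (c * B.partialDeriv i F * B.partialDeriv i G) := by
    simp only [hν, Derivation.leibniz _ (_ * _) G, Derivation.leibniz _ (ν * c), hDν, hc,
      Derivation.leibniz _ ν c, smul_eq_mul]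
    ring
  have hcancel : B.weightedInner (c * B.sturmLiouville i F) G =
      B.integral (ν * c * B.partialDeriv i (B.factor i * B.partialDeriv i F) * G) := by
    rw [weightedInner_apply, hν]
    refine integral_congr fun x hx => ?_
    simp only [sturmLiouville_apply, MulMemClass.coe_mul, Pi.mul_apply]
    linear_combination (ν.1 x * c.1 x * (B.partialDeriv i (B.factor i * B.partialDeriv i F)).1 x *
      G.1 x) * B.factor_mul_factorInv_apply i hx
  have hzero := integral_partialDeriv_eq_zero hflux
  rw [hleibniz, map_add] at hzero
  rw [hcancel, weightedInner_apply]
  exact eq_neg_of_add_eq_zero_left hzero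

theorem weightedInner_sturmLiouville (F : B.smoothFunctions) (hG : G ∈ B.faceIdeal i) :
    B.weightedInner (B.sturmLiouville i F) G =
      -B.weightedInner (B.partialDeriv i F) (B.partialDeriv i G) := by
  simpa only [one_mul] using
    weightedInner_mul_sturmLiouville (B.partialDeriv i).map_one_eq_zero F hG

theorem partialDeriv_sturmLiouville (hij : i ≠ j) (F : B.smoothFunctions) :
    B.partialDeriv i (B.sturmLiouville j F) = B.sturmLiouville j (B.partialDeriv i F) := by
  have hfactor : B.partialDeriv i (B.factor j) = 0 := partialDeriv_coordFun hij _
  have hfactorInv : B.partialDeriv i (B.factorInv j) = 0 := partialDeriv_coordFun hij _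
  have hflux : B.partialDeriv i (B.factor j * B.partialDeriv j F) =
      B.factor j * B.partialDeriv j (B.partialDeriv i F) := by
    rw [Derivation.leibniz, hfactor, smul_zero, add_zero, smul_eq_mul, partialDeriv_comm]
  rw [sturmLiouville_apply, Derivation.leibniz, hfactorInv, smul_zero, add_zero, smul_eq_mul,
    partialDeriv_comm, hflux, sturmLiouville_apply]

/-! ### Coercivity of the factorized operator -/

variable (B)

/-- The factorized operator `∏ᵢ (1 - κᵢ Lᵢ)`, the product being taken along the list of directions
`l` and `Lᵢ` being `B.sturmLiouville i`. -/
def splitOperator (κ : Fin (n + 1) → ℝ) (l : List (Fin (n + 1))) : Module.End ℝ B.smoothFunctions :=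
  (l.map fun i => 1 - κ i • B.sturmLiouville i).prod

variable {B} {κ : Fin (n + 1) → ℝ}

theorem partialDeriv_splitOperator {l : List (Fin (n + 1))} (hi : i ∉ l) (F : B.smoothFunctions) :
    B.partialDeriv i (B.splitOperator κ l F) = B.splitOperator κ l (B.partialDeriv i F) := by
  induction l with
  | nil => rfl
  | cons j l ih =>
    have hij : i ≠ j := List.ne_of_not_mem_cons hi
    simp only [splitOperator, List.map_cons, List.prod_cons, Module.End.mul_apply,
      LinearMap.sub_apply, Module.End.one_apply, LinearMap.smul_apply, map_sub, Derivation.map_smul,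
      partialDeriv_sturmLiouville hij] at ih ⊢
    rw [ih (List.not_mem_of_not_mem_cons hi)]

-- Only the terms of order at most one in `κ` are kept: integrating by parts, the others are
-- weighted squares of mixed derivatives.
theorem weightedInner_splitOperator_self_ge {l : List (Fin (n + 1))} (hκ : ∀ i, 0 ≤ κ i)
    (hl : l.Nodup) (hF : ∀ i ∈ l, F ∈ B.faceIdeal i) :
    B.weightedInner F F +
        (l.map fun i => κ i * B.weightedInner (B.partialDeriv i F) (B.partialDeriv i F)).sum ≤
      B.weightedInner (B.splitOperator κ l F) F := by
  induction l generalizing F with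
  | nil => simp [splitOperator]
  | cons i l ih =>
    obtain ⟨hil, hl⟩ := List.nodup_cons.1 hl
    have hsplit : B.splitOperator κ (i :: l) F =
        B.splitOperator κ l F - κ i • B.sturmLiouville i (B.splitOperator κ l F) := rfl
    have hgreen : B.weightedInner (B.sturmLiouville i (B.splitOperator κ l F)) F =
        -B.weightedInner (B.splitOperator κ l (B.partialDeriv i F)) (B.partialDeriv i F) := by
      rw [weightedInner_sturmLiouville _ (hF i (by simp)), partialDeriv_splitOperator hil]
    have hrest := ih hl fun j hj => hF j (by simp [hj])
    have hderiv : B.weightedInner (B.partialDeriv i F) (B.partialDeriv i F) ≤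
        B.weightedInner (B.splitOperator κ l (B.partialDeriv i F)) (B.partialDeriv i F) := by
      refine le_trans (le_add_of_nonneg_right (List.sum_nonneg ?_)) (ih hl fun j hj =>
        partialDeriv_mem_faceIdeal (ne_of_mem_of_not_mem hj hil).symm (hF j (by simp [hj])))
      simp only [List.mem_map, forall_exists_index, and_imp, forall_apply_eq_imp_iff₂]
      exact fun j _ => mul_nonneg (hκ j) (weightedInner_self_nonneg _)
    rw [hsplit, map_sub, LinearMap.sub_apply, map_smul, LinearMap.smul_apply, smul_eq_mul, hgreen,
      List.map_cons, List.sum_cons]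
    linarith [mul_le_mul_of_nonneg_left hderiv (hκ i)]

/-! ### Energy decay of the scheme on a box -/

variable (B)

/-- The bilinear form `∑ᵢ ∫ cᵢ ∂ᵢF ∂ᵢG` with respect to the weight. -/
def dirichletForm (c : Fin (n + 1) → B.smoothFunctions) : LinearMap.BilinForm ℝ B.smoothFunctions :=
  ∑ i, B.weightedInner.compl₁₂ (LinearMap.mulLeft ℝ (c i) ∘ₗ (B.partialDeriv i).toLinearMap)
    (B.partialDeriv i).toLinearMap

/-- The operator `∑ᵢ cᵢ Lᵢ`, where `Lᵢ` is `B.sturmLiouville i`. -/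
def laplacian (c : Fin (n + 1) → B.smoothFunctions) : Module.End ℝ B.smoothFunctions :=
  ∑ i, LinearMap.mulLeft ℝ (c i) ∘ₗ B.sturmLiouville i

variable {B} {c k : Fin (n + 1) → B.smoothFunctions}

theorem dirichletForm_apply (F G : B.smoothFunctions) : B.dirichletForm c F G =
    ∑ i, B.weightedInner (c i * B.partialDeriv i F) (B.partialDeriv i G) := by
  simp [dirichletForm, LinearMap.sum_apply]

theorem laplacian_apply (F : B.smoothFunctions) :
    B.laplacian c F = ∑ i, c i * B.sturmLiouville i F := by
  simp [laplacian, LinearMap.sum_apply]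

theorem dirichletForm_isSymm : (B.dirichletForm c).IsSymm :=
  ⟨fun F G => by
    simp only [dirichletForm_apply, weightedInner_apply]
    refine Finset.sum_congr rfl fun i _ => congrArg _ ?_
    ring⟩

theorem dirichletForm_sub_apply (F : B.smoothFunctions) :
    (B.dirichletForm k - B.dirichletForm c) F F =
      ∑ i, B.weightedInner ((k i - c i) * B.partialDeriv i F) (B.partialDeriv i F) := by
  simp only [LinearMap.sub_apply, dirichletForm_apply, sub_mul, map_sub, Finset.sum_sub_distrib]

theorem dirichletForm_sub_isNonneg (h : ∀ i, ∀ x ∈ B.box, (c i).1 x ≤ (k i).1 x) :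
    (B.dirichletForm k - B.dirichletForm c).IsNonneg :=
  ⟨fun F => by
    rw [dirichletForm_sub_apply]
    refine Finset.sum_nonneg fun i _ => weightedInner_nonneg fun x hx => ?_
    have hsq := mul_nonneg (sub_nonneg.2 (h i x hx)) (mul_self_nonneg ((B.partialDeriv i F).1 x))
    rwa [← mul_assoc] at hsq⟩

theorem weightedInner_laplacian (hc : ∀ i, B.partialDeriv i (c i) = 0) (F : B.smoothFunctions)
    (hG : ∀ i, G ∈ B.faceIdeal i) :
    B.weightedInner (B.laplacian c F) G = -B.dirichletForm c F G := by
  simp only [laplacian_apply, map_sum, LinearMap.sum_apply, dirichletForm_apply,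
    weightedInner_mul_sturmLiouville (hc _) F (hG _), Finset.sum_neg_distrib]

theorem douglasEnergy_step_of_scheme {k : Fin (n + 1) → ℝ} (hk : ∀ i, 0 ≤ k i)
    (hc : ∀ i, B.partialDeriv i (c i) = 0) (hck : ∀ i, ∀ x ∈ B.box, (c i).1 x ≤ k i)
    {τ : ℝ} (hτ : 0 < τ) {x y z v : B.smoothFunctions} (hv : τ • v = x - y)
    (hface : ∀ i, v ∈ B.faceIdeal i)
    (hscheme : EqOn (B.splitOperator (fun i => τ / 2 * k i) (List.finRange (n + 1)) v).1
      (B.laplacian c ((3 / 2 : ℝ) • y - (1 / 2 : ℝ) • z) -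
        (1 / 2 : ℝ) • B.laplacian (fun i => algebraMap ℝ _ (k i)) (y - z)).1 (interior B.box)) :
    let energy := douglasEnergy (B.dirichletForm c) (B.dirichletForm fun i => algebraMap ℝ _ (k i))
    τ * (B.weightedInner (x - y) (x - y) / τ ^ 2) + energy x y ≤ energy y z := by
  refine douglasEnergy_step dirichletForm_isSymm dirichletForm_isSymm
    (dirichletForm_sub_isNonneg hck) hτ hv ?_
  have hcoercive := weightedInner_splitOperator_self_ge (κ := fun i => τ / 2 * k i)
    (fun i => mul_nonneg (by positivity) (hk i)) (List.nodup_finRange (n + 1))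
    fun i _ => hface i
  rw [weightedInner_congr_left (eqOn_box_of_eqOn_interior hscheme), ← Fin.sum_univ_def]
    at hcoercive
  have hconst (i : Fin (n + 1)) :
      B.partialDeriv i (algebraMap ℝ B.smoothFunctions (k i)) = 0 :=
    (B.partialDeriv i).map_algebraMap _
  have hmajorant : τ / 2 * B.dirichletForm (fun i => algebraMap ℝ _ (k i)) v v =
      ∑ i, τ / 2 * k i * B.weightedInner (B.partialDeriv i v) (B.partialDeriv i v) := by
    simp only [dirichletForm_apply, ← Algebra.smul_def, map_smul, LinearMap.smul_apply, smul_eq_mul,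
      Finset.mul_sum, mul_assoc]
  rw [hmajorant]
  refine hcoercive.trans_eq ?_
  rw [map_sub, map_smul, LinearMap.sub_apply, LinearMap.smul_apply,
    weightedInner_laplacian hc _ hface, weightedInner_laplacian hconst _ hface, smul_eq_mul,
    mul_neg, sub_neg_eq_add]

end WeightedBox

/-! ### Iterated integrals -/

theorem setIntegral_Icc_eq_integral_cons {n : ℕ} {a b : Fin (n + 1) → ℝ}
    {f : (Fin (n + 1) → ℝ) → ℝ} (hf : ContinuousOn f (Icc a b)) :
    ∫ x in Icc a b, f x =
      ∫ t in Icc (a 0) (b 0), ∫ y in Icc (Fin.tail a) (Fin.tail b), f (Fin.cons t y) := by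
  have he := (volume_preserving_piFinSuccAbove (fun _ : Fin (n + 1) => ℝ) 0).symm
  have hemb :=
    (MeasurableEquiv.piFinSuccAbove (fun _ : Fin (n + 1) => ℝ) 0).symm.measurableEmbedding
  have hpre : (MeasurableEquiv.piFinSuccAbove (fun _ : Fin (n + 1) => ℝ) 0).symm ⁻¹' Icc a b =
      Icc (a 0) (b 0) ×ˢ Icc (Fin.tail a) (Fin.tail b) := by
    ext p
    exact Fin.insertNth_mem_Icc
  have hint := (he.integrableOn_comp_preimage hemb).2 (hf.integrableOn_compact isCompact_Icc)
  rw [hpre] at hint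
  rw [← he.setIntegral_preimage_emb hemb, hpre]
  refine (setIntegral_prod _ hint).trans ?_
  simp only [Function.comp_apply, MeasurableEquiv.piFinSuccAbove_symm_apply,
    Fin.insertNthEquiv_zero]
  rfl

theorem continuousOn_comp_cons {n : ℕ} {a b : Fin (n + 1) → ℝ} {f : (Fin (n + 1) → ℝ) → ℝ}
    (hf : ContinuousOn f (Icc a b)) {t : ℝ} (ht : t ∈ Icc (a 0) (b 0)) :
    ContinuousOn (fun y : Fin n → ℝ => f (Fin.cons t y)) (Icc (Fin.tail a) (Fin.tail b)) :=
  hf.comp (Continuous.finCons (A := fun _ => ℝ) continuous_const continuous_id).continuousOn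
    fun y hy => by
      rw [← Fin.insertNth_zero']
      exact Fin.insertNth_mem_Icc.2 ⟨ht, hy⟩

theorem setIntegral_Icc_fin_three {a b : Fin 3 → ℝ} {f : (Fin 3 → ℝ) → ℝ}
    (hf : ContinuousOn f (Icc a b)) :
    ∫ x in Icc a b, f x =
      ∫ r in Icc (a 0) (b 0), ∫ s in Icc (a 1) (b 1), ∫ t in Icc (a 2) (b 2), f ![r, s, t] := by
  rw [setIntegral_Icc_eq_integral_cons hf]
  refine setIntegral_congr_fun measurableSet_Icc fun r hr => ?_
  have hfr := continuousOn_comp_cons hf hr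
  simp only [setIntegral_Icc_eq_integral_cons hfr]
  refine setIntegral_congr_fun measurableSet_Icc fun s hs => ?_
  simp only [setIntegral_Icc_eq_integral_cons (continuousOn_comp_cons hfr hs)]
  refine setIntegral_congr_fun measurableSet_Icc fun t _ => ?_
  rw [Subsingleton.elim (Fin.tail (Fin.tail (Fin.tail a))) ![],
    Subsingleton.elim (Fin.tail (Fin.tail (Fin.tail b))) ![], Icc_self, integral_singleton,
    volume_pi, Measure.pi_of_empty _ ![], Measure.real,
    Measure.dirac_apply_of_mem (mem_singleton _), ENNReal.toReal_one, one_smul]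
  rfl

/-! ### The spherical shell -/

/-- A coordinate box `[R1,R2] × [θ1,θ2] × [φ1,φ2]` of spherical coordinates `(r, θ, φ)`, bounded
away from the origin and from the polar axis. -/
structure SphericalBox where
  R1 : ℝ
  R2 : ℝ
  θ1 : ℝ
  θ2 : ℝ
  φ1 : ℝ
  φ2 : ℝ
  R1_pos : 0 < R1
  R1_lt_R2 : R1 < R2
  θ1_pos : 0 < θ1
  θ1_lt_θ2 : θ1 < θ2
  θ2_lt_pi : θ2 < π
  φ1_lt_φ2 : φ1 < φ2

namespace SphericalBox

variable (S : SphericalBox) {r θ : ℝ}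

theorem pos_of_mem_Icc (hr : r ∈ Icc S.R1 S.R2) : 0 < r := S.R1_pos.trans_le hr.1

theorem sin_pos_of_mem_Icc (hθ : θ ∈ Icc S.θ1 S.θ2) : 0 < sin θ :=
  sin_pos_of_pos_of_lt_pi (S.θ1_pos.trans_le hθ.1) (hθ.2.trans_lt S.θ2_lt_pi)

theorem sin_θ1_pos : 0 < sin S.θ1 := S.sin_pos_of_mem_Icc (left_mem_Icc.2 S.θ1_lt_θ2.le)

/-- The box with the volume density `r² · sin θ · 1` of spherical coordinates. -/
def weightedBox : WeightedBox 2 where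
  lower := ![S.R1, S.θ1, S.φ1]
  upper := ![S.R2, S.θ2, S.φ2]
  density := ![fun r => r ^ 2, sin, fun _ => 1]
  lower_lt_upper i := by
    fin_cases i
    exacts [S.R1_lt_R2, S.θ1_lt_θ2, S.φ1_lt_φ2]
  contDiffOn_density i := by
    fin_cases i
    exacts [(contDiff_id.pow 2).contDiffOn, contDiff_sin.contDiffOn, contDiffOn_const]
  density_pos i t ht := by
    fin_cases i
    exacts [pow_pos (S.pos_of_mem_Icc ht) 2, S.sin_pos_of_mem_Icc ht, one_pos]

/-- The coefficients `1`, `r⁻²`, `(r sin θ)⁻²` of the Laplacian `Δ`. -/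
def laplaceCoeff : Fin 3 → S.weightedBox.smoothFunctions :=
  ![1, S.weightedBox.factorInv 0,
    S.weightedBox.factorInv 0 * (S.weightedBox.factorInv 1 * S.weightedBox.factorInv 1)]

/-- The constant coefficients `1`, `R1⁻²`, `(R1 sin θ1)⁻²` of the modified Laplacian `Δ̂`. -/
def modifiedCoeff : Fin 3 → ℝ := ![1, 1 / S.R1 ^ 2, 1 / (S.R1 ^ 2 * sin S.θ1 ^ 2)]

variable {S} {x : Fin 3 → ℝ}

theorem mem_interior_box : x ∈ interior S.weightedBox.box ↔
    x 0 ∈ Ioo S.R1 S.R2 ∧ x 1 ∈ Ioo S.θ1 S.θ2 ∧ x 2 ∈ Ioo S.φ1 S.φ2 := by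
  rw [WeightedBox.interior_box, mem_univ_pi]
  exact ⟨fun h => ⟨h 0, h 1, h 2⟩, fun h i => by fin_cases i; exacts [h.1, h.2.1, h.2.2]⟩

theorem mem_interior_SBox {p : ℝ × ℝ × ℝ} :
    p ∈ interior (SBox S.R1 S.R2 S.θ1 S.θ2 S.φ1 S.φ2) ↔
      p.1 ∈ Ioo S.R1 S.R2 ∧ p.2.1 ∈ Ioo S.θ1 S.θ2 ∧ p.2.2 ∈ Ioo S.φ1 S.φ2 := by
  simp only [SBox, interior_prod_eq, interior_Icc, mem_prod]

theorem mem_SBox_of_mem_box (hx : x ∈ S.weightedBox.box) :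
    (x 0, x 1, x 2) ∈ SBox S.R1 S.R2 S.θ1 S.θ2 S.φ1 S.φ2 :=
  ⟨⟨hx.1 0, hx.2 0⟩, ⟨hx.1 1, hx.2 1⟩, ⟨hx.1 2, hx.2 2⟩⟩

theorem partialDeriv_laplaceCoeff (i : Fin 3) :
    S.weightedBox.partialDeriv i (S.laplaceCoeff i) = 0 := by
  have hfactorInv {i j : Fin 3} (hij : i ≠ j) :
      S.weightedBox.partialDeriv i (S.weightedBox.factorInv j) = 0 :=
    WeightedBox.partialDeriv_coordFun hij _
  fin_cases i
  · exact Derivation.map_one_eq_zero _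
  · exact hfactorInv (by decide)
  · change S.weightedBox.partialDeriv 2 (_ * (_ * _)) = 0
    simp only [Derivation.leibniz, hfactorInv (show (2 : Fin 3) ≠ 0 by decide),
      hfactorInv (show (2 : Fin 3) ≠ 1 by decide), smul_zero, add_zero]

theorem modifiedCoeff_nonneg (i : Fin 3) : 0 ≤ S.modifiedCoeff i := by
  fin_cases i
  · exact zero_le_one
  · exact one_div_nonneg.2 (sq_nonneg _)
  · exact one_div_nonneg.2 (by positivity)

theorem laplaceCoeff_zero_apply : (S.laplaceCoeff 0).1 x = 1 := rfl

theorem laplaceCoeff_one_apply : (S.laplaceCoeff 1).1 x = 1 / x 0 ^ 2 := (one_div _).symm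

theorem laplaceCoeff_two_apply :
    (S.laplaceCoeff 2).1 x = 1 / (x 0 ^ 2 * sin (x 1) ^ 2) := by
  change (x 0 ^ 2)⁻¹ * ((sin (x 1))⁻¹ * (sin (x 1))⁻¹) = _
  rw [one_div, mul_inv, sq (sin (x 1)), mul_inv (sin (x 1))]

theorem laplaceCoeff_le_modifiedCoeff (hsin : ∀ θ ∈ Icc S.θ1 S.θ2, sin S.θ1 ≤ sin θ) (i : Fin 3)
    (hx : x ∈ S.weightedBox.box) : (S.laplaceCoeff i).1 x ≤ S.modifiedCoeff i := by
  have hR1 := S.R1_pos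
  have hθ1 := S.sin_θ1_pos
  have hr : S.R1 ≤ x 0 := hx.1 0
  have hθ : sin S.θ1 ≤ sin (x 1) := hsin _ ⟨hx.1 1, hx.2 1⟩
  fin_cases i
  · exact le_rfl
  · exact laplaceCoeff_one_apply.trans_le (one_div_le_one_div_of_le (by positivity) (by gcongr))
  · exact laplaceCoeff_two_apply.trans_le (one_div_le_one_div_of_le (by positivity) (by gcongr))

variable (S) in
/-- The restriction to the box of a function of `(r, θ, φ)` that is smooth there. -/
def restrict (u : ℝ → ℝ → ℝ → ℝ) (hu : SmoothOnBox S.R1 S.R2 S.θ1 S.θ2 S.φ1 S.φ2 u) :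
    S.weightedBox.smoothFunctions :=
  ⟨fun x => u (x 0) (x 1) (x 2), hu.comp (t := SBox S.R1 S.R2 S.θ1 S.θ2 S.φ1 S.φ2)
    (f := fun x : Fin 3 → ℝ => (x 0, x 1, x 2)) (by fun_prop) fun _ hx => mem_SBox_of_mem_box hx⟩

/-- `F` and `u` agree on the open box. The one-sided derivatives of `F` and the two-sided
derivatives of `u` need not agree on its boundary. -/
def Represents (F : S.weightedBox.smoothFunctions) (u : ℝ → ℝ → ℝ → ℝ) : Prop :=
  ∀ x ∈ interior S.weightedBox.box, u (x 0) (x 1) (x 2) = F.1 x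

namespace Represents

variable {F G : S.weightedBox.smoothFunctions} {u v : ℝ → ℝ → ℝ → ℝ}

theorem partialDeriv_zero (hF : Represents F u) :
    Represents (S.weightedBox.partialDeriv 0 F) (pr u) := fun _ hx =>
  WeightedBox.deriv_eq_partialDeriv F hx fun _ ht => by simpa using hF _ ht

theorem partialDeriv_one (hF : Represents F u) :
    Represents (S.weightedBox.partialDeriv 1 F) (pt u) := fun _ hx =>
  WeightedBox.deriv_eq_partialDeriv F hx fun _ ht => by simpa using hF _ ht

theorem partialDeriv_two (hF : Represents F u) :
    Represents (S.weightedBox.partialDeriv 2 F) (pp u) := fun _ hx =>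
  WeightedBox.deriv_eq_partialDeriv F hx fun _ ht => by simpa using hF _ ht

theorem sub (hF : Represents F u) (hG : Represents G v) :
    Represents (F - G) fun r θ φ => u r θ φ - v r θ φ := fun x hx =>
  congrArg₂ (· - ·) (hF x hx) (hG x hx)

theorem mul (hF : Represents F u) (hG : Represents G v) :
    Represents (F * G) fun r θ φ => u r θ φ * v r θ φ := fun x hx =>
  congrArg₂ (· * ·) (hF x hx) (hG x hx)

theorem smul (c : ℝ) (hF : Represents F u) : Represents (c • F) fun r θ φ => c * u r θ φ :=
  fun x hx => congrArg (c * ·) (hF x hx)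

theorem add (hF : Represents F u) (hG : Represents G v) :
    Represents (F + G) fun r θ φ => u r θ φ + v r θ φ := fun x hx =>
  congrArg₂ (· + ·) (hF x hx) (hG x hx)

theorem drr (hF : Represents F u) : Represents (S.weightedBox.sturmLiouville 0 F) (Drr u) := by
  have hfactor : Represents (S.weightedBox.factor 0) fun r _ _ => r ^ 2 := fun _ _ => rfl
  have hfactorInv : Represents (S.weightedBox.factorInv 0) fun r _ _ => 1 / r ^ 2 := fun _ _ =>
    one_div _
  exact hfactorInv.mul (hfactor.mul hF.partialDeriv_zero).partialDeriv_zero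

theorem sturmLiouville_one (hF : Represents F u) :
    Represents (S.weightedBox.sturmLiouville 1 F) fun r θ φ =>
      1 / sin θ * pt (fun r θ φ => sin θ * pt u r θ φ) r θ φ := by
  have hfactor : Represents (S.weightedBox.factor 1) fun _ θ _ => sin θ := fun _ _ => rfl
  have hfactorInv : Represents (S.weightedBox.factorInv 1) fun _ θ _ => 1 / sin θ := fun _ _ =>
    one_div _
  exact hfactorInv.mul (hfactor.mul hF.partialDeriv_one).partialDeriv_one

theorem sturmLiouville_two (hF : Represents F u) :
    Represents (S.weightedBox.sturmLiouville 2 F) (pp (pp u)) := by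
  have hfactor : S.weightedBox.factor 2 = 1 := rfl
  have hfactorInv : S.weightedBox.factorInv 2 = 1 := Subtype.ext (funext fun _ => inv_one)
  rw [WeightedBox.sturmLiouville_apply, hfactor, hfactorInv, one_mul, one_mul]
  exact hF.partialDeriv_two.partialDeriv_two

theorem dtt (hF : Represents F u) :
    Represents (S.laplaceCoeff 1 * S.weightedBox.sturmLiouville 1 F) (Dtt u) := fun x hx => by
  rw [MulMemClass.coe_mul, Pi.mul_apply, laplaceCoeff_one_apply, ← hF.sturmLiouville_one x hx, Dtt,
    ← mul_assoc, one_div_mul_one_div]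

theorem dpp (hF : Represents F u) :
    Represents (S.laplaceCoeff 2 * S.weightedBox.sturmLiouville 2 F) (Dpp u) := fun x hx => by
  rw [MulMemClass.coe_mul, Pi.mul_apply, laplaceCoeff_two_apply, ← hF.sturmLiouville_two x hx, Dpp]

theorem dhtt (hF : Represents F u) :
    Represents (S.modifiedCoeff 1 • S.weightedBox.sturmLiouville 1 F) (Dhtt S.R1 u) :=
  fun x hx => by
    rw [← hF.sturmLiouville_one.smul (S.modifiedCoeff 1) x hx]
    exact (congrArg (· * _) (one_div_mul_one_div _ _).symm).trans (mul_assoc _ _ _)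

theorem dhpp (hF : Represents F u) :
    Represents (S.modifiedCoeff 2 • S.weightedBox.sturmLiouville 2 F) (Dhpp S.R1 S.θ1 u) :=
  hF.sturmLiouville_two.smul (S.modifiedCoeff 2)

theorem laplacian (hF : Represents F u) :
    Represents (S.weightedBox.laplacian S.laplaceCoeff F) (lap u) := by
  rw [WeightedBox.laplacian_apply, Fin.sum_univ_three, show S.laplaceCoeff 0 = 1 from rfl, one_mul]
  exact (hF.drr.add hF.dtt).add hF.dpp

theorem modifiedLaplacian (hF : Represents F u) :
    Represents (S.weightedBox.laplacian (fun i => algebraMap ℝ _ (S.modifiedCoeff i)) F)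
      (laph S.R1 S.θ1 u) := by
  simp only [WeightedBox.laplacian_apply, ← Algebra.smul_def]
  rw [Fin.sum_univ_three, show S.modifiedCoeff 0 = 1 from rfl, one_smul]
  exact (hF.drr.add hF.dhtt).add hF.dhpp

/-! ### Integrals and energies -/

theorem integral_eq (hF : Represents F u) :
    ∫ r in Icc S.R1 S.R2, ∫ θ in Icc S.θ1 S.θ2, ∫ φ in Icc S.φ1 S.φ2, u r θ φ =
      S.weightedBox.integral F := by
  refine Eq.trans ?_ (setIntegral_Icc_fin_three (WeightedBox.continuousOn F)).symm
  change _ = ∫ r in Icc S.R1 S.R2, ∫ θ in Icc S.θ1 S.θ2, ∫ φ in Icc S.φ1 S.φ2, F.1 ![r, θ, φ]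
  simp only [integral_Icc_eq_integral_Ioo]
  exact setIntegral_congr_fun measurableSet_Ioo fun r hr =>
    setIntegral_congr_fun measurableSet_Ioo fun θ hθ =>
      setIntegral_congr_fun measurableSet_Ioo fun φ hφ =>
        hF ![r, θ, φ] (mem_interior_box.2 ⟨hr, hθ, hφ⟩)

theorem weight : Represents S.weightedBox.weight fun r θ _ => r ^ 2 * sin θ := fun x _ => by
  rw [WeightedBox.weight_apply, Fin.prod_univ_three]
  exact (mul_one _).symm

theorem ipw_eq (hF : Represents F u) (hG : Represents G v) :
    ipw S.R1 S.R2 S.θ1 S.θ2 S.φ1 S.φ2 u v = S.weightedBox.weightedInner F G := by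
  rw [WeightedBox.weightedInner_apply, mul_comm]
  exact ((hF.mul hG).mul weight).integral_eq

theorem gradE_eq (hF : Represents F u) :
    gradE S.R1 S.R2 S.θ1 S.θ2 S.φ1 S.φ2 u =
      S.weightedBox.dirichletForm S.laplaceCoeff F F := by
  rw [WeightedBox.dirichletForm_apply, Fin.sum_univ_three]
  simp only [WeightedBox.weightedInner_apply, ← map_add]
  refine integral_eq fun x hx => ?_
  simp only [MulMemClass.coe_mul, AddMemClass.coe_add, Pi.mul_apply,
    Pi.add_apply, laplaceCoeff_zero_apply, laplaceCoeff_one_apply, laplaceCoeff_two_apply,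
    ← weight x hx, ← hF.partialDeriv_zero x hx, ← hF.partialDeriv_one x hx,
    ← hF.partialDeriv_two x hx]
  ring

theorem wnorm_pt_eq (hF : Represents F u) :
    wnorm S.R1 S.R2 S.θ1 S.θ2 S.φ1 S.φ2 (fun r θ => (r ^ 2 / S.R1 ^ 2 - 1) * sin θ) (pt u) =
      S.weightedBox.weightedInner ((algebraMap ℝ _ (S.modifiedCoeff 1) - S.laplaceCoeff 1) *
        S.weightedBox.partialDeriv 1 F) (S.weightedBox.partialDeriv 1 F) := by
  rw [WeightedBox.weightedInner_apply]
  refine integral_eq fun x hx => ?_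
  have hr : x 0 ≠ 0 := (S.pos_of_mem_Icc (Ioo_subset_Icc_self (mem_interior_box.1 hx).1)).ne'
  have hcoeff : (algebraMap ℝ _ (S.modifiedCoeff 1) - S.laplaceCoeff 1).1 x =
      1 / S.R1 ^ 2 - 1 / x 0 ^ 2 := congrArg (_ - ·) laplaceCoeff_one_apply
  simp only [MulMemClass.coe_mul, Pi.mul_apply, hcoeff, ← weight x hx, ← hF.partialDeriv_one x hx]
  field_simp

theorem wnorm_pp_eq (hF : Represents F u) :
    wnorm S.R1 S.R2 S.θ1 S.θ2 S.φ1 S.φ2 (fun r θ => r ^ 2 * sin θ *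
      (1 / (S.R1 ^ 2 * sin S.θ1 ^ 2) - 1 / (r ^ 2 * sin θ ^ 2))) (pp u) =
      S.weightedBox.weightedInner ((algebraMap ℝ _ (S.modifiedCoeff 2) - S.laplaceCoeff 2) *
        S.weightedBox.partialDeriv 2 F) (S.weightedBox.partialDeriv 2 F) := by
  rw [WeightedBox.weightedInner_apply]
  refine integral_eq fun x hx => ?_
  have hcoeff : (algebraMap ℝ _ (S.modifiedCoeff 2) - S.laplaceCoeff 2).1 x =
      1 / (S.R1 ^ 2 * sin S.θ1 ^ 2) - 1 / (x 0 ^ 2 * sin (x 1) ^ 2) :=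
    congrArg (_ - ·) laplaceCoeff_two_apply
  simp only [MulMemClass.coe_mul, Pi.mul_apply, hcoeff, ← weight x hx, ← hF.partialDeriv_two x hx]
  ring

end Represents

/-! ### Stability of the Douglas scheme -/

variable (S)

/-- The quantity bounded by the stability estimate, at the consecutive time levels `u` (new) and
`v` (old). -/
def stabilityEnergy (u v : ℝ → ℝ → ℝ → ℝ) : ℝ :=
  1 / 2 * gradE S.R1 S.R2 S.θ1 S.θ2 S.φ1 S.φ2 u +
    1 / 4 * (wnorm S.R1 S.R2 S.θ1 S.θ2 S.φ1 S.φ2 (fun r θ => (r ^ 2 / S.R1 ^ 2 - 1) * sin θ)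
        (pt fun r θ φ => u r θ φ - v r θ φ) +
      wnorm S.R1 S.R2 S.θ1 S.θ2 S.φ1 S.φ2 (fun r θ => r ^ 2 * sin θ *
        (1 / (S.R1 ^ 2 * sin S.θ1 ^ 2) - 1 / (r ^ 2 * sin θ ^ 2)))
        (pp fun r θ φ => u r θ φ - v r θ φ))

/-- The factorized operator `(I - (τ/2) D_rr)(I - (τ/2) D̂_θθ)(I - (τ/2) D̂_φφ)`. -/
def factorizedOperator (τ : ℝ) (v : ℝ → ℝ → ℝ → ℝ) : ℝ → ℝ → ℝ → ℝ :=
  (fun v : ℝ → ℝ → ℝ → ℝ => fun r θ φ => v r θ φ - τ / 2 * Drr v r θ φ)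
    ((fun v : ℝ → ℝ → ℝ → ℝ => fun r θ φ => v r θ φ - τ / 2 * Dhtt S.R1 v r θ φ)
      ((fun v : ℝ → ℝ → ℝ → ℝ => fun r θ φ => v r θ φ - τ / 2 * Dhpp S.R1 S.θ1 v r θ φ) v))

/-- One step of the Douglas scheme on the open box: `u` is computed from the two preceding time
levels `v` and `w`, the latter being the older one. -/
def IsDouglasStep (τ : ℝ) (u v w : ℝ → ℝ → ℝ → ℝ) : Prop :=
  ∀ p ∈ interior (SBox S.R1 S.R2 S.θ1 S.θ2 S.φ1 S.φ2),
    S.factorizedOperator τ (fun r θ φ => (u r θ φ - v r θ φ) / τ) p.1 p.2.1 p.2.2 =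
      lap (fun r θ φ => 3 / 2 * v r θ φ - 1 / 2 * w r θ φ) p.1 p.2.1 p.2.2 -
        1 / 2 * laph S.R1 S.θ1 (fun r θ φ => v r θ φ - w r θ φ) p.1 p.2.1 p.2.2

variable {S} {F G : S.weightedBox.smoothFunctions} {τ : ℝ} {u v w : ℝ → ℝ → ℝ → ℝ}

theorem stabilityEnergy_eq_douglasEnergy (hF : Represents F u) (hG : Represents G v) :
    S.stabilityEnergy u v = douglasEnergy (S.weightedBox.dirichletForm S.laplaceCoeff)
      (S.weightedBox.dirichletForm fun i => algebraMap ℝ _ (S.modifiedCoeff i)) F G := by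
  have hzero : algebraMap ℝ _ (S.modifiedCoeff 0) - S.laplaceCoeff 0 = 0 := sub_self _
  rw [stabilityEnergy, douglasEnergy, WeightedBox.dirichletForm_sub_apply, Fin.sum_univ_three,
    hzero, zero_mul, map_zero, LinearMap.zero_apply, zero_add, hF.gradE_eq,
    (hF.sub hG).wnorm_pt_eq, (hF.sub hG).wnorm_pp_eq]

theorem Represents.factorizedOperator (hF : Represents F u) :
    Represents (S.weightedBox.splitOperator (fun i => τ / 2 * S.modifiedCoeff i)
      (List.finRange 3) F) (S.factorizedOperator τ u) := by
  have hfactor (i : Fin 3) (F : S.weightedBox.smoothFunctions) :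
      (1 - (τ / 2 * S.modifiedCoeff i) • S.weightedBox.sturmLiouville i) F =
        F - (τ / 2) • S.modifiedCoeff i • S.weightedBox.sturmLiouville i F := by
    rw [mul_smul]
    rfl
  have hφ := hF.sub (hF.dhpp.smul (τ / 2))
  have hθ := hφ.sub (hφ.dhtt.smul (τ / 2))
  have hr := hθ.sub (hθ.drr.smul (τ / 2))
  rw [show List.finRange 3 = [0, 1, 2] from rfl, WeightedBox.splitOperator]
  simp only [List.map_cons, List.map_nil, List.prod_cons, List.prod_nil, mul_one,
    Module.End.mul_apply, hfactor]
  rwa [show S.modifiedCoeff 0 = 1 from rfl, one_smul]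

theorem restrict_mem_faceIdeal (hu : SmoothOnBox S.R1 S.R2 S.θ1 S.θ2 S.φ1 S.φ2 u)
    (hbd : VanishOnBdry S.R1 S.R2 S.θ1 S.θ2 S.φ1 S.φ2 u) (i : Fin 3) :
    S.restrict u hu ∈ S.weightedBox.faceIdeal i := fun x hx hxi => by
  refine hbd (x 0, x 1, x 2) ⟨subset_closure (mem_SBox_of_mem_box hx), fun hint => ?_⟩
  have hIoo : x i ∈ Ioo (S.weightedBox.lower i) (S.weightedBox.upper i) := by
    rw [mem_interior_SBox] at hint
    fin_cases i
    exacts [hint.1, hint.2.1, hint.2.2]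
  rcases hxi with h | h
  exacts [hIoo.1.ne' h, hIoo.2.ne h]

theorem stabilityEnergy_step (hsin : ∀ θ ∈ Icc S.θ1 S.θ2, sin S.θ1 ≤ sin θ) (hτ : 0 < τ)
    (hu : SmoothOnBox S.R1 S.R2 S.θ1 S.θ2 S.φ1 S.φ2 u)
    (hv : SmoothOnBox S.R1 S.R2 S.θ1 S.θ2 S.φ1 S.φ2 v)
    (hw : SmoothOnBox S.R1 S.R2 S.θ1 S.θ2 S.φ1 S.φ2 w)
    (hbd : VanishOnBdry S.R1 S.R2 S.θ1 S.θ2 S.φ1 S.φ2 fun r θ φ => u r θ φ - v r θ φ)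
    (hstep : S.IsDouglasStep τ u v w) :
    τ * (ipw S.R1 S.R2 S.θ1 S.θ2 S.φ1 S.φ2 (fun r θ φ => u r θ φ - v r θ φ)
        (fun r θ φ => u r θ φ - v r θ φ) / τ ^ 2) + S.stabilityEnergy u v ≤
      S.stabilityEnergy v w := by
  have hU : Represents (S.restrict u hu) u := fun _ _ => rfl
  have hV : Represents (S.restrict v hv) v := fun _ _ => rfl
  have hW : Represents (S.restrict w hw) w := fun _ _ => rfl
  have hrate : Represents (τ⁻¹ • (S.restrict u hu - S.restrict v hv))
      fun r θ φ => (u r θ φ - v r θ φ) / τ := fun x _ => (div_eq_inv_mul _ _)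
  rw [(hU.sub hV).ipw_eq (hU.sub hV), stabilityEnergy_eq_douglasEnergy hU hV,
    stabilityEnergy_eq_douglasEnergy hV hW]
  refine WeightedBox.douglasEnergy_step_of_scheme modifiedCoeff_nonneg partialDeriv_laplaceCoeff
    (fun i _ => laplaceCoeff_le_modifiedCoeff hsin i) hτ (smul_inv_smul₀ hτ.ne' _)
    (fun i => Submodule.smul_of_tower_mem _ _
      (restrict_mem_faceIdeal (u := fun r θ φ => u r θ φ - v r θ φ) (ContDiffOn.sub hu hv) hbd i))
    fun x hx => ?_
  have hrhs := ((hV.smul (3 / 2)).sub (hW.smul (1 / 2))).laplacian.sub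
    ((hV.sub hW).modifiedLaplacian.smul (1 / 2))
  rw [← hrate.factorizedOperator x hx, ← hrhs x hx]
  exact hstep (x 0, x 1, x 2) (mem_interior_SBox.2 (mem_interior_box.1 hx))

end SphericalBox

theorem VanishOnBdry.sub {R1 R2 θ1 θ2 φ1 φ2 : ℝ} {u v : ℝ → ℝ → ℝ → ℝ}
    (hu : VanishOnBdry R1 R2 θ1 θ2 φ1 φ2 u) (hv : VanishOnBdry R1 R2 θ1 θ2 φ1 φ2 v) :
    VanishOnBdry R1 R2 θ1 θ2 φ1 φ2 fun r θ φ => u r θ φ - v r θ φ := fun p hp => by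
  simp only [hu p hp, hv p hp, sub_self]

theorem douglas_splitting_unconditional_stability_general (S : SphericalBox)
    (hsin : ∀ θ ∈ Icc S.θ1 S.θ2, sin S.θ1 ≤ sin θ) {τ : ℝ} (hτ : 0 < τ) {N : ℕ} (hN : 1 ≤ N)
    {T : ℕ → ℝ → ℝ → ℝ → ℝ}
    (hT : ∀ n ≤ N, SmoothOnBox S.R1 S.R2 S.θ1 S.θ2 S.φ1 S.φ2 (T n))
    (hbd : ∀ n, 1 ≤ n → n ≤ N - 1 → VanishOnBdry S.R1 S.R2 S.θ1 S.θ2 S.φ1 S.φ2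
      fun r θ φ => T (n + 1) r θ φ - T n r θ φ)
    (hstep : ∀ n, 1 ≤ n → n ≤ N - 1 → S.IsDouglasStep τ (T (n + 1)) (T n) (T (n - 1))) :
    τ * (∑ n ∈ Finset.Icc 1 (N - 1), ipw S.R1 S.R2 S.θ1 S.θ2 S.φ1 S.φ2
        (fun r θ φ => T (n + 1) r θ φ - T n r θ φ) (fun r θ φ => T (n + 1) r θ φ - T n r θ φ) /
          τ ^ 2) + S.stabilityEnergy (T N) (T (N - 1)) ≤ S.stabilityEnergy (T 1) (T 0) := by
  obtain ⟨m, rfl⟩ := Nat.exists_eq_add_of_le' hN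
  rw [Finset.mul_sum]
  refine sum_Icc_add_le_of_forall_add_le (E := fun n => S.stabilityEnergy (T n) (T (n - 1)))
    fun n hn => ?_
  obtain ⟨hn1, hnm⟩ := Finset.mem_Icc.1 hn
  exact SphericalBox.stabilityEnergy_step hsin hτ (hT _ (by omega)) (hT _ (by omega))
    (hT _ (by omega)) (hbd n hn1 hnm) (hstep n hn1 hnm)

theorem douglas_splitting_unconditional_stability
    (R1 R2 θ1 θ2 φ1 φ2 : ℝ)
    (hR1 : 0 < R1) (hRR : R1 < R2)
    (hθ1 : 0 < θ1) (hθθ : θ1 < θ2) (hθ2 : θ2 < Real.pi)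
    (hφ : φ1 < φ2)
    (hsin : ∀ θ ∈ Icc θ1 θ2, Real.sin θ1 ≤ Real.sin θ)
    (τ : ℝ) (hτ : 0 < τ)
    (N : ℕ) (hN : 2 ≤ N)
    (T : ℕ → ℝ → ℝ → ℝ → ℝ)
    (hTsm : ∀ n ≤ N, SmoothOnBox R1 R2 θ1 θ2 φ1 φ2 (T n))
    (hTbd : ∀ n ≤ N, VanishOnBdry R1 R2 θ1 θ2 φ1 φ2 (T n))
    (hscheme : ∀ n, 1 ≤ n → n ≤ N - 1 → ∀ p ∈ SBox R1 R2 θ1 θ2 φ1 φ2,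
      (fun v : ℝ → ℝ → ℝ → ℝ => fun r θ φ => v r θ φ - τ / 2 * Drr v r θ φ)
        ((fun v : ℝ → ℝ → ℝ → ℝ => fun r θ φ => v r θ φ - τ / 2 * Dhtt R1 v r θ φ)
          ((fun v : ℝ → ℝ → ℝ → ℝ => fun r θ φ => v r θ φ - τ / 2 * Dhpp R1 θ1 v r θ φ)
            (fun r θ φ => (T (n + 1) r θ φ - T n r θ φ) / τ)))
        p.1 p.2.1 p.2.2
      = lap (fun r θ φ => 3 / 2 * T n r θ φ - 1 / 2 * T (n - 1) r θ φ) p.1 p.2.1 p.2.2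
        - 1 / 2 * laph R1 θ1 (fun r θ φ => T n r θ φ - T (n - 1) r θ φ) p.1 p.2.1 p.2.2) :
    τ * (∑ n ∈ Finset.Icc 1 (N - 1),
        ipw R1 R2 θ1 θ2 φ1 φ2 (fun r θ φ => T (n + 1) r θ φ - T n r θ φ)
          (fun r θ φ => T (n + 1) r θ φ - T n r θ φ) / τ ^ 2)
      + 1 / 2 * gradE R1 R2 θ1 θ2 φ1 φ2 (T N)
      + 1 / 4 * (wnorm R1 R2 θ1 θ2 φ1 φ2 (fun r θ => (r ^ 2 / R1 ^ 2 - 1) * Real.sin θ)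
            (pt (fun r θ φ => T N r θ φ - T (N - 1) r θ φ))
          + wnorm R1 R2 θ1 θ2 φ1 φ2
            (fun r θ => r ^ 2 * Real.sin θ *
              (1 / (R1 ^ 2 * Real.sin θ1 ^ 2) - 1 / (r ^ 2 * Real.sin θ ^ 2)))
            (pp (fun r θ φ => T N r θ φ - T (N - 1) r θ φ)))
    ≤ 1 / 2 * gradE R1 R2 θ1 θ2 φ1 φ2 (T 1)
      + 1 / 4 * (wnorm R1 R2 θ1 θ2 φ1 φ2 (fun r θ => (r ^ 2 / R1 ^ 2 - 1) * Real.sin θ)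
            (pt (fun r θ φ => T 1 r θ φ - T 0 r θ φ))
          + wnorm R1 R2 θ1 θ2 φ1 φ2
            (fun r θ => r ^ 2 * Real.sin θ *
              (1 / (R1 ^ 2 * Real.sin θ1 ^ 2) - 1 / (r ^ 2 * Real.sin θ ^ 2)))
            (pp (fun r θ φ => T 1 r θ φ - T 0 r θ φ))) := by
  simpa only [SphericalBox.stabilityEnergy, ← add_assoc] using
    douglas_splitting_unconditional_stability_general
      ⟨R1, R2, θ1, θ2, φ1, φ2, hR1, hRR, hθ1, hθθ, hθ2, hφ⟩ hsin hτ (one_le_two.trans hN) hTsm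
      (fun n _ hn => (hTbd (n + 1) (by omega)).sub (hTbd n (by omega)))
      fun n hn1 hn p hp => hscheme n hn1 hn p (interior_subset hp)
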